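/- For every d ≥ 1 and every nontrivial (d-1)-cycle Z on [n] over F_2, there exists a collapsible acyclic set F of d-simplices on [n] with ∂F = Z and C(n-1,d) − |F| ≤ C(n-1,d-2) (with the convention C(m,k) = 0 for k < 0). Moreover, there are at least n − 2d distinct such sets F. -/

import Mathlib

open Finset symmDiff

/-- The vertex set `[n] = {1, …, n}`. -/
def rng (n : ℕ) : Finset ℕ := Finset.Icc 1 n

/-- The set of `d`-simplices (i.e. `(d+1)`-element subsets) on the vertex set `V`. -/
def simplices (V : Finset ℕ) (d : ℕ) : Finset (Finset ℕ) :=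
  V.powerset.filter fun σ => σ.card = d + 1

/-- The mod-2 boundary of a set `X` of simplices: the set of faces `τ` of codimension one
(`|τ| + 1 = |σ|`) contained in an odd number of members of `X`. -/
def bd (X : Finset (Finset ℕ)) : Finset (Finset ℕ) :=
  (X.biUnion fun σ => σ.powerset).filter
    fun τ => Odd (X.filter fun σ => τ ⊆ σ ∧ τ.card + 1 = σ.card).card

/-- A set of simplices is acyclic (a forest) over `F_2` if no nonempty subset has
empty boundary. -/
def IsAcyclic (F : Finset (Finset ℕ)) : Prop :=
  ∀ Y ⊆ F, Y ≠ ∅ → bd Y ≠ ∅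

/-- A `d`-hypertree on `V`: a maximal acyclic set of `d`-simplices on `V`. -/
def IsHypertreeOn (V : Finset ℕ) (d : ℕ) (T : Finset (Finset ℕ)) : Prop :=
  T ⊆ simplices V d ∧ IsAcyclic T ∧
    ∀ G, T ⊆ G → G ⊆ simplices V d → IsAcyclic G → G = T

/-- A simple cycle over `F_2`: a nonempty set with empty boundary, no nonempty proper
subset of which has empty boundary. -/
def IsSimpleCycle (Z : Finset (Finset ℕ)) : Prop :=
  Z ≠ ∅ ∧ bd Z = ∅ ∧ ∀ Y ⊂ Z, Y ≠ ∅ → bd Y ≠ ∅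

/-- Collapsibility: `X` can be reduced to `∅` by repeatedly removing a simplex `σ ∈ X`
containing a codimension-one face contained in no other current member of `X`. -/
inductive Collapsible : Finset (Finset ℕ) → Prop
  | empty : Collapsible ∅
  | step (X : Finset (Finset ℕ)) (σ τ : Finset ℕ) (hσ : σ ∈ X) (hτ : τ ⊆ σ)
      (hcard : τ.card + 1 = σ.card) (huniq : ∀ σ' ∈ X, τ ⊆ σ' → σ' = σ)
      (h : Collapsible (X.erase σ)) : Collapsible X

/-- The cone over `X` with apex `v`. -/
def cone (v : ℕ) (X : Finset (Finset ℕ)) : Finset (Finset ℕ) :=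
  X.image (insert v)

/-- The link of the vertex `v` in `X`. -/
def link (v : ℕ) (X : Finset (Finset ℕ)) : Finset (Finset ℕ) :=
  (X.filter fun σ => v ∈ σ).image fun σ => σ.erase v

/-- `fill Z T`: the subset `F ⊆ T` with `∂F = Z` (when it exists; it is unique when `T`
is a hypertree and `Z` a cycle). -/
noncomputable def fill (Z T : Finset (Finset ℕ)) : Finset (Finset ℕ) :=
  if h : ∃ F, F ⊆ T ∧ bd F = Z then h.choose else ∅

/-- The average filling-volume `μ(T)` of a `d`-hypertree `T` on `[n]`. -/
noncomputable def fillVolAvg (n d : ℕ) (T : Finset (Finset ℕ)) : ℝ :=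
  (∑ σ ∈ simplices (rng n) d, ((fill (bd {σ}) T).card : ℝ)) / (n.choose (d + 1) : ℝ)

open Classical in
/-- The cut of `τ` in `T`: the set of `d`-simplices `σ` on `[n]` such that
`T ⊕ {τ} ⊕ {σ}` is a `d`-hypertree on `[n]`. -/
noncomputable def cut (n d : ℕ) (τ : Finset ℕ) (T : Finset (Finset ℕ)) : Finset (Finset ℕ) :=
  (simplices (rng n) d).filter fun σ => IsHypertreeOn (rng n) d ((T ∆ {τ}) ∆ {σ})

/-!
Induct on the vertex set. Pick a vertex `v` of the cycle `Z` and split `Z = D ∆ cone v L`, where `D`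
is the deletion and `L` the link of `v`. As `∂Z = ∅`, the link is a cycle one dimension lower and
`∂D = L`. If `F'` fills `L` and `G` fills the cycle `D ∆ F'`, both avoiding `v`, then
`G ∆ cone v F'` fills `Z`: collapse the cone along the collapse of `F'`, then collapse `G`. The sizes
of `F'` and `G` add up to the required bound by Pascal's rule. The union determines `F'`, so distinct
`F'` give distinct fillings; only `F' = D`, for which `D ∆ F'` is trivial, has to be discarded. This
loss is affordable because `n - 2d` is larger by one for `L` than for `Z`. On fewer than `2d`
vertices the size bound is nonpositive and the cone over `D` suffices.
-/

section Boundary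

variable {τ : Finset ℕ} {X : Finset (Finset ℕ)}

/-- The members of `X` of which `τ` is a face of codimension one. -/
def cofaces (X : Finset (Finset ℕ)) (τ : Finset ℕ) : Finset (Finset ℕ) :=
  {σ ∈ X | τ ⊆ σ ∧ #τ + 1 = #σ}

theorem mem_cofaces {σ : Finset ℕ} : σ ∈ cofaces X τ ↔ σ ∈ X ∧ τ ⊆ σ ∧ #τ + 1 = #σ :=
  mem_filter

theorem cofaces_symmDiff (X Y : Finset (Finset ℕ)) (τ : Finset ℕ) :
    cofaces (X ∆ Y) τ = cofaces X τ ∆ cofaces Y τ := by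
  ext σ
  simp only [mem_cofaces, mem_symmDiff]
  tauto

theorem mem_bd : τ ∈ bd X ↔ Odd #(cofaces X τ) := by
  refine mem_filter.trans (and_iff_right_of_imp fun hodd => ?_)
  obtain ⟨σ, hσ⟩ := card_pos.mp hodd.pos
  obtain ⟨hσX, hτσ, -⟩ := mem_cofaces.mp hσ
  exact mem_biUnion.mpr ⟨σ, hσX, mem_powerset.mpr hτσ⟩

theorem odd_card_symmDiff {α : Type*} [DecidableEq α] (A B : Finset α) :
    Odd #(A ∆ B) ↔ Xor (Odd #A) (Odd #B) := by
  have hcard : #(A ∆ B) = #(A \ B) + #(B \ A) :=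
    card_union_of_disjoint disjoint_sdiff_sdiff
  have hA := card_sdiff_add_card_inter A B
  have hB := card_sdiff_add_card_inter B A
  rw [inter_comm] at hB
  simp only [Nat.odd_iff, Xor, hcard]
  omega

theorem bd_symmDiff (X Y : Finset (Finset ℕ)) : bd (X ∆ Y) = bd X ∆ bd Y := by
  ext τ
  rw [mem_symmDiff, mem_bd, mem_bd, mem_bd, cofaces_symmDiff]
  exact odd_card_symmDiff _ _

theorem notMem_of_mem_bd {v : ℕ} (hX : ∀ σ ∈ X, v ∉ σ) : ∀ τ ∈ bd X, v ∉ τ := by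
  intro τ hτ hv
  obtain ⟨σ, hσX, hτσ⟩ := mem_biUnion.mp (mem_filter.mp hτ).1
  exact hX σ hσX (mem_powerset.mp hτσ hv)

theorem Collapsible.isAcyclic (hX : Collapsible X) : IsAcyclic X := by
  induction hX with
  | empty => exact fun Y hY hne => absurd (subset_empty.mp hY) hne
  | step X σ τ _ hτσ hcard huniq _ ih =>
    intro Y hY hne
    by_cases hσ : σ ∈ Y
    · have hcofaces : cofaces Y τ = {σ} := by
        refine eq_singleton_iff_unique_mem.mpr ⟨mem_cofaces.mpr ⟨hσ, hτσ, hcard⟩, fun ρ hρ => ?_⟩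
        obtain ⟨hρY, hτρ, -⟩ := mem_cofaces.mp hρ
        exact huniq ρ (hY hρY) hτρ
      exact ne_empty_of_mem (a := τ) (mem_bd.mpr (by simp [hcofaces]))
    · exact ih Y (subset_erase.mpr ⟨hY, hσ⟩) hne

end Boundary

section VertexDecomposition

variable {v : ℕ} {τ : Finset ℕ} {A B F X : Finset (Finset ℕ)}

/-- The deletion of the vertex `v` from `X`: the members of `X` avoiding `v`. -/
def deletion (v : ℕ) (X : Finset (Finset ℕ)) : Finset (Finset ℕ) :=
  {σ ∈ X | v ∉ σ}

theorem mem_deletion : τ ∈ deletion v X ↔ τ ∈ X ∧ v ∉ τ :=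
  mem_filter

theorem mem_link : τ ∈ link v X ↔ insert v τ ∈ X ∧ v ∉ τ := by
  simp only [link, mem_image, mem_filter]
  constructor
  · rintro ⟨σ, ⟨hσ, hv⟩, rfl⟩
    exact ⟨by rwa [insert_erase hv], notMem_erase v σ⟩
  · rintro ⟨hτ, hv⟩
    exact ⟨insert v τ, ⟨hτ, mem_insert_self v τ⟩, erase_insert hv⟩

theorem mem_cone (hX : ∀ σ ∈ X, v ∉ σ) : τ ∈ cone v X ↔ v ∈ τ ∧ τ.erase v ∈ X := by
  rw [cone, mem_image]
  constructor
  · rintro ⟨σ, hσ, rfl⟩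
    exact ⟨mem_insert_self v σ, by rwa [erase_insert (hX σ hσ)]⟩
  · rintro ⟨hv, hτ⟩
    exact ⟨τ.erase v, hτ, insert_erase hv⟩

theorem notMem_of_mem_deletion : ∀ σ ∈ deletion v X, v ∉ σ :=
  fun _ hσ => (mem_deletion.mp hσ).2

theorem notMem_of_mem_link : ∀ σ ∈ link v X, v ∉ σ :=
  fun _ hσ => (mem_link.mp hσ).2

theorem mem_of_mem_cone : ∀ σ ∈ cone v X, v ∈ σ := by
  simp [cone]

theorem card_cone (hX : ∀ σ ∈ X, v ∉ σ) : #(cone v X) = #X :=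
  card_image_of_injOn ((insert_erase_invOn.2).injOn.mono hX)

theorem deletion_symmDiff_cone_link (v : ℕ) (X : Finset (Finset ℕ)) :
    deletion v X ∆ cone v (link v X) = X := by
  ext σ
  rw [mem_symmDiff, mem_deletion, mem_cone notMem_of_mem_link, mem_link]
  by_cases hv : v ∈ σ <;> simp [hv]

theorem deletion_symmDiff_cone (hA : ∀ σ ∈ A, v ∉ σ) : deletion v (A ∆ cone v B) = A := by
  ext σ
  have := hA σ
  have := mem_of_mem_cone (v := v) (X := B) σ
  rw [mem_deletion, mem_symmDiff]
  tauto

theorem link_symmDiff_cone (hA : ∀ σ ∈ A, v ∉ σ) (hB : ∀ σ ∈ B, v ∉ σ) :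
    link v (A ∆ cone v B) = B := by
  ext σ
  have hσA : insert v σ ∉ A := fun h => hA _ h (mem_insert_self v σ)
  rw [mem_link, mem_symmDiff, mem_cone hB]
  by_cases hv : v ∈ σ
  · simpa [hv] using fun h => hB σ h hv
  · simp [hv, hσA, erase_insert hv]

theorem disjoint_cone (hA : ∀ σ ∈ A, v ∉ σ) : Disjoint A (cone v B) :=
  disjoint_left.mpr fun σ hσA hσB => hA σ hσA (mem_of_mem_cone σ hσB)

theorem symmDiff_cone_eq_union (hA : ∀ σ ∈ A, v ∉ σ) : A ∆ cone v B = A ∪ cone v B :=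
  symmDiff_eq_union (disjoint_cone hA)

theorem card_symmDiff_cone (hA : ∀ σ ∈ A, v ∉ σ) (hB : ∀ σ ∈ B, v ∉ σ) :
    #(A ∆ cone v B) = #A + #B := by
  rw [symmDiff_cone_eq_union hA, card_union_of_disjoint (disjoint_cone hA), card_cone hB]

theorem cofaces_cone_of_mem (hX : ∀ σ ∈ X, v ∉ σ) (hv : v ∈ τ) :
    cofaces (cone v X) τ = cone v (cofaces X (τ.erase v)) := by
  rw [cofaces, cone, filter_image, cone, cofaces]
  congr 1
  refine filter_congr fun σ hσ => ?_
  rw [card_insert_of_notMem (hX σ hσ), subset_insert_iff, card_erase_add_one hv, add_left_inj]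

theorem mem_cofaces_cone_of_notMem {ρ : Finset ℕ} (hX : ∀ σ ∈ X, v ∉ σ) (hv : v ∉ τ) :
    ρ ∈ cofaces (cone v X) τ ↔ τ ∈ X ∧ ρ = insert v τ := by
  rw [mem_cofaces]
  constructor
  · rintro ⟨hρ, hτρ, hcard⟩
    obtain ⟨σ, hσ, rfl⟩ := mem_image.mp hρ
    rw [subset_insert_iff_of_notMem hv] at hτρ
    rw [card_insert_of_notMem (hX σ hσ), add_left_inj] at hcard
    obtain rfl := eq_of_subset_of_card_le hτρ hcard.ge
    exact ⟨hσ, rfl⟩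
  · rintro ⟨hτ, rfl⟩
    exact ⟨mem_image_of_mem _ hτ, subset_insert v τ, (card_insert_of_notMem hv).symm⟩

theorem bd_cone (hX : ∀ σ ∈ X, v ∉ σ) : bd (cone v X) = X ∆ cone v (bd X) := by
  ext τ
  rw [mem_bd, mem_symmDiff, mem_cone (notMem_of_mem_bd hX)]
  by_cases hv : v ∈ τ
  · have hτ : τ ∉ X := fun h => hX τ h hv
    have hcofaces : ∀ σ ∈ cofaces X (τ.erase v), v ∉ σ := fun σ hσ => hX σ (mem_cofaces.mp hσ).1
    simp [hv, hτ, cofaces_cone_of_mem hX hv, card_cone hcofaces, mem_bd]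
  · by_cases hτ : τ ∈ X
    · have hcofaces : cofaces (cone v X) τ = {insert v τ} := by
        ext ρ
        simp [mem_cofaces_cone_of_notMem hX hv, hτ]
      simp [hv, hτ, hcofaces]
    · have hcofaces : cofaces (cone v X) τ = ∅ :=
        eq_empty_of_forall_notMem fun ρ hρ => hτ ((mem_cofaces_cone_of_notMem hX hv).mp hρ).1
      simp [hv, hτ, hcofaces]

theorem bd_eq_symmDiff_cone (v : ℕ) (X : Finset (Finset ℕ)) :
    bd X = (bd (deletion v X) ∆ link v X) ∆ cone v (bd (link v X)) := by
  conv_lhs => rw [← deletion_symmDiff_cone_link v X]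
  rw [bd_symmDiff, bd_cone notMem_of_mem_link, symmDiff_assoc]

theorem notMem_of_mem_bd_deletion_symmDiff_link :
    ∀ σ ∈ bd (deletion v X) ∆ link v X, v ∉ σ := by
  intro σ hσ
  rcases mem_symmDiff.mp hσ with h | h
  · exact notMem_of_mem_bd notMem_of_mem_deletion σ h.1
  · exact notMem_of_mem_link σ h.1

theorem deletion_bd (v : ℕ) (X : Finset (Finset ℕ)) :
    deletion v (bd X) = bd (deletion v X) ∆ link v X := by
  rw [bd_eq_symmDiff_cone v X, deletion_symmDiff_cone notMem_of_mem_bd_deletion_symmDiff_link]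

theorem link_bd (v : ℕ) (X : Finset (Finset ℕ)) : link v (bd X) = bd (link v X) := by
  rw [bd_eq_symmDiff_cone v X, link_symmDiff_cone notMem_of_mem_bd_deletion_symmDiff_link
    (notMem_of_mem_bd notMem_of_mem_link)]

theorem bd_link_eq_empty (hX : bd X = ∅) : bd (link v X) = ∅ := by
  rw [← link_bd, hX]
  rfl

theorem bd_deletion_eq_link (hX : bd X = ∅) : bd (deletion v X) = link v X := by
  rw [← symmDiff_eq_empty, ← deletion_bd, hX]
  rfl

theorem bd_deletion_symmDiff_eq_empty (hX : bd X = ∅) (hF : bd F = link v X) :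
    bd (deletion v X ∆ F) = ∅ := by
  rw [bd_symmDiff, bd_deletion_eq_link hX, hF, symmDiff_eq_empty]

theorem bd_cone_deletion (hX : bd X = ∅) : bd (cone v (deletion v X)) = X := by
  rw [bd_cone notMem_of_mem_deletion, bd_deletion_eq_link hX, deletion_symmDiff_cone_link]

end VertexDecomposition

section Collapsibility

variable {v : ℕ} {X Y : Finset (Finset ℕ)}

theorem cone_insert (v : ℕ) (σ : Finset ℕ) (X : Finset (Finset ℕ)) :
    cone v (insert σ X) = insert (insert v σ) (cone v X) :=
  image_insert _ _ _

theorem collapsible_cone (hX : ∀ σ ∈ X, v ∉ σ) : Collapsible (cone v X) := by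
  -- A largest member `σ` of `X` is a free face of `insert v σ`.
  induction X using induction_on_max_value fun σ : Finset ℕ => #σ with
  | empty => exact Collapsible.empty
  | insert σ X hσX hmax ih =>
    have hvσ : v ∉ σ := hX σ (mem_insert_self σ X)
    have hvX : ∀ ρ ∈ X, v ∉ ρ := fun ρ hρ => hX ρ (mem_insert_of_mem hρ)
    refine Collapsible.step _ (insert v σ) σ ?_ (subset_insert v σ)
      (card_insert_of_notMem hvσ).symm ?_ ?_
    · exact mem_image_of_mem _ (mem_insert_self σ X)
    · intro σ' hσ' hsub
      obtain ⟨ρ, hρ, rfl⟩ := mem_image.mp hσ'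
      rw [subset_insert_iff_of_notMem hvσ] at hsub
      have hcard : #ρ ≤ #σ := by
        rcases mem_insert.mp hρ with rfl | hρX
        exacts [le_rfl, hmax ρ hρX]
      rw [eq_of_subset_of_card_le hsub hcard]
    · have hnotMem : insert v σ ∉ cone v X := by
        simp [mem_cone hvX, erase_insert hvσ, hσX]
      rw [cone_insert, erase_insert hnotMem]
      exact ih hvX

theorem Collapsible.union_cone (hY : Collapsible Y) (hvY : ∀ σ ∈ Y, v ∉ σ) (hX : Collapsible X)
    (hvX : ∀ σ ∈ X, v ∉ σ) : Collapsible (Y ∪ cone v X) := by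
  induction hX with
  | empty => simpa [cone] using hY
  | step X σ τ hσ hτσ hcard huniq _ ih =>
    have hvσ : v ∉ σ := hvX σ hσ
    have hvτ : v ∉ τ := fun h => hvσ (hτσ h)
    have hvX' : ∀ ρ ∈ X.erase σ, v ∉ ρ := fun ρ hρ => hvX ρ (mem_of_mem_erase hρ)
    refine Collapsible.step _ (insert v σ) (insert v τ) ?_ (insert_subset_insert v hτσ) ?_ ?_ ?_
    · exact mem_union_right _ (mem_image_of_mem _ hσ)
    · rw [card_insert_of_notMem hvσ, card_insert_of_notMem hvτ, hcard]
    · intro σ' hσ' hsub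
      rcases mem_union.mp hσ' with hσ'Y | hσ'X
      · exact absurd (hsub (mem_insert_self v τ)) (hvY σ' hσ'Y)
      · obtain ⟨ρ, hρ, rfl⟩ := mem_image.mp hσ'X
        have hτρ : τ ⊆ ρ :=
          (subset_insert_iff_of_notMem hvτ).mp ((subset_insert v τ).trans hsub)
        rw [huniq ρ hρ hτρ]
    · have hY : insert v σ ∉ Y := fun h => hvY _ h (mem_insert_self v σ)
      have hcone : insert v σ ∉ cone v (X.erase σ) := by
        simp [mem_cone hvX', erase_insert hvσ]
      have herase : (Y ∪ cone v X).erase (insert v σ) = Y ∪ cone v (X.erase σ) := by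
        rw [← insert_erase hσ, cone_insert, union_insert, erase_insert_eq_erase,
          erase_insert_eq_erase, erase_eq_of_notMem (notMem_erase σ X),
          erase_eq_of_notMem (notMem_union.mpr ⟨hY, hcone⟩)]
      rw [herase]
      exact ih hvX'

end Collapsibility

section UniformFamilies

variable {V : Finset ℕ} {k v : ℕ} {X : Finset (Finset ℕ)}

theorem simplices_eq_powersetCard (V : Finset ℕ) (d : ℕ) :
    simplices V d = V.powersetCard (d + 1) := by
  ext σ
  simp [simplices, mem_powersetCard]

theorem notMem_of_subset_powersetCard_erase (hX : X ⊆ (V.erase v).powersetCard k) :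
    ∀ σ ∈ X, v ∉ σ :=
  fun _ hσ hv => notMem_erase v V ((mem_powersetCard.mp (hX hσ)).1 hv)

theorem cone_subset_powersetCard (hv : v ∈ V) (hX : X ⊆ (V.erase v).powersetCard k) :
    cone v X ⊆ V.powersetCard (k + 1) := by
  intro τ hτ
  obtain ⟨σ, hσ, rfl⟩ := mem_image.mp hτ
  obtain ⟨hσV, hcard⟩ := mem_powersetCard.mp (hX hσ)
  rw [mem_powersetCard, card_insert_of_notMem (notMem_of_subset_powersetCard_erase hX σ hσ), hcard]
  exact ⟨insert_subset hv (hσV.trans (erase_subset v V)), rfl⟩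

theorem link_subset_powersetCard (hX : X ⊆ V.powersetCard (k + 1)) :
    link v X ⊆ (V.erase v).powersetCard k := by
  intro τ hτ
  obtain ⟨hτX, hv⟩ := mem_link.mp hτ
  obtain ⟨hτV, hcard⟩ := mem_powersetCard.mp (hX hτX)
  rw [card_insert_of_notMem hv, add_left_inj] at hcard
  exact mem_powersetCard.mpr ⟨subset_erase.mpr ⟨(subset_insert v τ).trans hτV, hv⟩, hcard⟩

theorem deletion_subset_powersetCard (hX : X ⊆ V.powersetCard k) :
    deletion v X ⊆ (V.erase v).powersetCard k := by
  intro τ hτ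
  obtain ⟨hτX, hv⟩ := mem_deletion.mp hτ
  obtain ⟨hτV, hcard⟩ := mem_powersetCard.mp (hX hτX)
  exact mem_powersetCard.mpr ⟨subset_erase.mpr ⟨hτV, hv⟩, hcard⟩

theorem deletion_symmDiff_subset_powersetCard {F : Finset (Finset ℕ)} (hX : X ⊆ V.powersetCard k)
    (hF : F ⊆ (V.erase v).powersetCard k) : deletion v X ∆ F ⊆ (V.erase v).powersetCard k :=
  symmDiff_subset_union.trans (union_subset (deletion_subset_powersetCard hX) hF)

end UniformFamilies

section SizeBound

/-- The lower bound `C(m, d) - C(m, d - 2)` on the size of the fillings on `m + 1` vertices. The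
case distinction avoids truncated subtraction: `C(m, d - 2)` stands for `0` when `d < 2`. -/
def sizeBound (m d : ℕ) : ℤ :=
  m.choose d - if 2 ≤ d then (m.choose (d - 2) : ℤ) else 0

theorem sizeBound_succ_succ (m d : ℕ) :
    sizeBound (m + 1) (d + 1) = sizeBound m (d + 1) + sizeBound m d := by
  rcases d with _ | _ | d <;> simp [sizeBound, Nat.choose_succ_succ'] <;> ring

theorem choose_add_two_le_choose {m k : ℕ} (h : m ≤ 2 * k + 2) :
    m.choose (k + 2) ≤ m.choose k := by
  refine Nat.le_of_mul_le_mul_right (c := (k + 2) * (k + 1)) ?_ (by positivity)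
  calc m.choose (k + 2) * ((k + 2) * (k + 1))
      = m.choose (k + 1) * (m - (k + 1)) * (k + 1) := by
        rw [← mul_assoc, Nat.choose_succ_right_eq m (k + 1)]
    _ = m.choose k * ((m - k) * (m - (k + 1))) := by
        rw [mul_right_comm, Nat.choose_succ_right_eq m k, mul_assoc]
    _ ≤ m.choose k * ((k + 2) * (k + 1)) := by gcongr <;> omega

theorem sizeBound_nonpos {m d : ℕ} (h : m + 2 ≤ 2 * d) : sizeBound m d ≤ 0 := by
  obtain _ | _ | k := d
  · omega
  · obtain rfl : m = 0 := by omega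
    simp [sizeBound]
  · simpa [sizeBound] using choose_add_two_le_choose (by omega : m ≤ 2 * k + 2)

end SizeBound

section Filling

variable {V : Finset ℕ} {d v : ℕ} {Z F G : Finset (Finset ℕ)}

/-- `F` is a collapsible set of `d`-simplices on `V` with boundary `Z` whose size reaches the bound
for `#V` vertices. -/
structure IsLargeFilling (V : Finset ℕ) (d : ℕ) (Z F : Finset (Finset ℕ)) : Prop where
  subset : F ⊆ V.powersetCard (d + 1)
  collapsible : Collapsible F
  bd_eq : bd F = Z
  sizeBound_le : sizeBound (#V - 1) d ≤ #F

theorem IsLargeFilling.cone_deletion (hv : v ∈ V) (hZ : Z ⊆ V.powersetCard d) (hcyc : bd Z = ∅)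
    (hsize : sizeBound (#V - 1) d ≤ #(deletion v Z)) :
    IsLargeFilling V d Z (cone v (deletion v Z)) where
  subset := cone_subset_powersetCard hv (deletion_subset_powersetCard hZ)
  collapsible := collapsible_cone notMem_of_mem_deletion
  bd_eq := bd_cone_deletion hcyc
  sizeBound_le := by rwa [card_cone notMem_of_mem_deletion]

theorem IsLargeFilling.symmDiff_cone (hv : v ∈ V) (hV : (V.erase v).Nonempty)
    (hF : IsLargeFilling (V.erase v) d (link v Z) F)
    (hG : IsLargeFilling (V.erase v) (d + 1) (deletion v Z ∆ F) G) :
    IsLargeFilling V (d + 1) Z (G ∆ cone v F) := by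
  have hvF := notMem_of_subset_powersetCard_erase hF.subset
  have hvG := notMem_of_subset_powersetCard_erase hG.subset
  refine ⟨?_, ?_, ?_, ?_⟩
  · rw [symmDiff_cone_eq_union hvG]
    exact union_subset (hG.subset.trans (powersetCard_mono (erase_subset v V)))
      (cone_subset_powersetCard hv hF.subset)
  · rw [symmDiff_cone_eq_union hvG]
    exact hG.collapsible.union_cone hvG hF.collapsible hvF
  · calc bd (G ∆ cone v F)
        = (deletion v Z ∆ F) ∆ (F ∆ cone v (link v Z)) := by
          rw [bd_symmDiff, hG.bd_eq, bd_cone hvF, hF.bd_eq]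
      _ = deletion v Z ∆ cone v (link v Z) := by
          rw [symmDiff_assoc, symmDiff_symmDiff_cancel_left]
      _ = Z := deletion_symmDiff_cone_link v Z
  · obtain ⟨m, hm⟩ := Nat.exists_eq_add_one.mpr hV.card_pos
    have hVm : #V - 1 = m + 1 := by rw [← card_erase_of_mem hv, hm]
    have hFsize := hF.sizeBound_le
    have hGsize := hG.sizeBound_le
    rw [hm, Nat.add_sub_cancel] at hFsize hGsize
    rw [hVm, sizeBound_succ_succ, card_symmDiff_cone hvG hvF]
    push_cast
    linarith

theorem isLargeFilling_zero_singleton (hv : v ∈ V) : IsLargeFilling V 0 {∅} {{v}} := by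
  have hcyc : bd {∅} = ∅ := by decide
  have hdeletion : deletion v {∅} = {∅} := by simp [deletion, filter_singleton]
  simpa [hdeletion, cone] using
    IsLargeFilling.cone_deletion (d := 0) hv (by simp) hcyc (by simp [hdeletion, sizeBound])

theorem exists_isLargeFilling_of_card_lt (hV : V.Nonempty) (hZ : Z ⊆ V.powersetCard d)
    (hcyc : bd Z = ∅) (hsmall : #V < 2 * d) : ∃ F, IsLargeFilling V d Z F := by
  obtain ⟨v, hv⟩ := hV
  have hpos : 0 < #V := card_pos.mpr ⟨v, hv⟩
  have hbound : sizeBound (#V - 1) d ≤ 0 := sizeBound_nonpos (by omega)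
  exact ⟨_, .cone_deletion hv hZ hcyc (hbound.trans (Nat.cast_nonneg _))⟩

/-- `Z` has enough large fillings: at least one, and at least `#V - 2 * d` of them. The subtraction
is truncated, so only the first requirement matters when `#V ≤ 2 * d`. -/
def HasManyLargeFillings (V : Finset ℕ) (d : ℕ) (Z : Finset (Finset ℕ)) : Prop :=
  ∃ S : Finset (Finset (Finset ℕ)), S.Nonempty ∧ #V - 2 * d ≤ #S ∧ ∀ F ∈ S, IsLargeFilling V d Z F

theorem hasManyLargeFillings_zero (hV : V.Nonempty) : HasManyLargeFillings V 0 {∅} := by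
  refine ⟨V.image fun v => {{v}}, hV.image _, ?_, ?_⟩
  · rw [card_image_of_injective V fun a b h => by simpa using h]
    exact Nat.sub_le _ _
  · exact forall_mem_image.mpr fun v hv => isLargeFilling_zero_singleton hv

theorem hasManyLargeFillings_of_card_le (hsmall : #V ≤ 2 * d) (hF : IsLargeFilling V d Z F) :
    HasManyLargeFillings V d Z :=
  ⟨{F}, singleton_nonempty F, by simp [Nat.sub_eq_zero_of_le hsmall], by simpa using hF⟩

theorem HasManyLargeFillings.exists_isLargeFilling (h : HasManyLargeFillings V d Z) :
    ∃ F, IsLargeFilling V d Z F :=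
  let ⟨_, ⟨F, hF⟩, _, hS⟩ := h
  ⟨F, hS F hF⟩

theorem exists_card_eq_and_isLargeFilling (hv : v ∈ V) (hV : (V.erase v).Nonempty)
    {T : Finset (Finset (Finset ℕ))}
    (hF : ∀ F ∈ T, IsLargeFilling (V.erase v) d (link v Z) F)
    (hG : ∀ F ∈ T, ∃ G, IsLargeFilling (V.erase v) (d + 1) (deletion v Z ∆ F) G) :
    ∃ S : Finset (Finset (Finset ℕ)), #S = #T ∧ ∀ F ∈ S, IsLargeFilling V (d + 1) Z F := by
  choose! G hG using hG
  have hlink : ∀ F ∈ T, link v (G F ∆ cone v F) = F := fun F hFT =>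
    link_symmDiff_cone (notMem_of_subset_powersetCard_erase (hG F hFT).subset)
      (notMem_of_subset_powersetCard_erase (hF F hFT).subset)
  refine ⟨T.image fun F => G F ∆ cone v F, ?_, ?_⟩
  · exact card_image_of_injOn (Set.LeftInvOn.injOn hlink)
  · exact forall_mem_image.mpr fun F hFT => (hF F hFT).symmDiff_cone hv hV (hG F hFT)

theorem HasManyLargeFillings.of_link (hv : v ∈ V) (hcard : 2 * (d + 1) ≤ #V)
    (hZ : Z ⊆ V.powersetCard (d + 1)) (hcyc : bd Z = ∅)
    (hlink : HasManyLargeFillings (V.erase v) d (link v Z))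
    (hfill : ∀ W ⊆ (V.erase v).powersetCard (d + 1), bd W = ∅ → W.Nonempty →
      ∃ G, IsLargeFilling (V.erase v) (d + 1) W G) :
    HasManyLargeFillings V (d + 1) Z := by
  obtain ⟨S, hSne, hScard, hS⟩ := hlink
  have herase : #(V.erase v) + 1 = #V := card_erase_add_one hv
  have hV : (V.erase v).Nonempty := card_pos.mp (by omega)
  rcases hcard.eq_or_lt with heq | hlt
  · obtain ⟨F, hFS⟩ := hSne
    have hF := hS F hFS
    obtain ⟨G, hG⟩ := exists_isLargeFilling_of_card_lt hV
      (deletion_symmDiff_subset_powersetCard hZ hF.subset)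
      (bd_deletion_symmDiff_eq_empty hcyc hF.bd_eq) (by omega)
    exact hasManyLargeFillings_of_card_le heq.ge (hF.symmDiff_cone hv hV hG)
  · obtain ⟨S', hcard', hS'⟩ := exists_card_eq_and_isLargeFilling (T := S.erase (deletion v Z))
      hv hV (fun F hF => hS F (mem_of_mem_erase hF)) fun F hF => by
        have hF' := hS F (mem_of_mem_erase hF)
        exact hfill _ (deletion_symmDiff_subset_powersetCard hZ hF'.subset)
          (bd_deletion_symmDiff_eq_empty hcyc hF'.bd_eq)
          (symmDiff_nonempty.mpr (ne_of_mem_erase hF).symm)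
    have hpred : #S - 1 ≤ #(S.erase (deletion v Z)) := pred_card_le_card_erase
    exact ⟨S', card_pos.mp (by omega), by omega, hS'⟩

theorem hasManyLargeFillings (hV : V.Nonempty) (hZ : Z ⊆ V.powersetCard d) (hcyc : bd Z = ∅)
    (hne : Z.Nonempty) : HasManyLargeFillings V d Z := by
  induction V using Finset.strongInduction generalizing d Z with
  | H V ih =>
    rcases d with _ | d
    · obtain rfl : Z = {∅} :=
        (subset_singleton_iff.mp (by simpa using hZ)).resolve_left hne.ne_empty
      exact hasManyLargeFillings_zero hV
    rcases lt_or_ge #V (2 * (d + 1)) with hsmall | hlarge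
    · obtain ⟨F, hF⟩ := exists_isLargeFilling_of_card_lt hV hZ hcyc hsmall
      exact hasManyLargeFillings_of_card_le hsmall.le hF
    · obtain ⟨σ, hσ⟩ := hne
      obtain ⟨hσV, hσcard⟩ := mem_powersetCard.mp (hZ hσ)
      obtain ⟨v, hvσ⟩ : σ.Nonempty := card_pos.mp (by omega)
      have hv : v ∈ V := hσV hvσ
      have herase : #(V.erase v) + 1 = #V := card_erase_add_one hv
      have hV' : (V.erase v).Nonempty := card_pos.mp (by omega)
      have hlink : (link v Z).Nonempty :=
        ⟨σ.erase v, mem_link.mpr ⟨by rwa [insert_erase hvσ], notMem_erase v σ⟩⟩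
      refine .of_link hv hlarge hZ hcyc ?_ fun W hW hWcyc hWne => ?_
      · exact ih _ (erase_ssubset hv) hV' (link_subset_powersetCard hZ) (bd_link_eq_empty hcyc)
          hlink
      · exact (ih _ (erase_ssubset hv) hV' hW hWcyc hWne).exists_isLargeFilling

end Filling

/-- For every `d ≥ 1` and every nontrivial `(d-1)`-cycle `Z` on `[n]` over `F_2`, there
exists a collapsible acyclic set `F` of `d`-simplices on `[n]` with `∂F = Z` and
`C(n-1,d) − |F| ≤ C(n-1,d-2)` (the bound being `0` for `d = 1`, by the convention
`C(m,k) = 0` for `k < 0`); moreover there are at least `n − 2d` distinct such `F`. -/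
theorem exists_large_collapsible_forest_with_boundary (d n : ℕ) (hd : 1 ≤ d)
    (Z : Finset (Finset ℕ)) (hZ : Z ⊆ simplices (rng n) (d - 1))
    (hZcyc : bd Z = ∅) (hZne : Z ≠ ∅) :
    (∃ F, F ⊆ simplices (rng n) d ∧ Collapsible F ∧ IsAcyclic F ∧ bd F = Z ∧
        ((n - 1).choose d : ℤ) - F.card ≤ (if 2 ≤ d then ((n - 1).choose (d - 2) : ℤ) else 0)) ∧
      ∃ S : Finset (Finset (Finset ℕ)), n - 2 * d ≤ S.card ∧
        ∀ F ∈ S, F ⊆ simplices (rng n) d ∧ Collapsible F ∧ IsAcyclic F ∧ bd F = Z ∧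
          ((n - 1).choose d : ℤ) - F.card ≤ (if 2 ≤ d then ((n - 1).choose (d - 2) : ℤ) else 0) := by
  have hcard : #(rng n) = n := by simp [rng]
  have hZ' : Z ⊆ (rng n).powersetCard d := by
    rwa [simplices_eq_powersetCard, Nat.sub_add_cancel hd] at hZ
  obtain ⟨σ, hσ⟩ := nonempty_iff_ne_empty.mpr hZne
  obtain ⟨hσn, hσcard⟩ := mem_powersetCard.mp (hZ' hσ)
  have hn : (rng n).Nonempty := (card_pos.mp (by omega)).mono hσn
  obtain ⟨S, ⟨F, hFS⟩, hScard, hS⟩ := hasManyLargeFillings hn hZ' hZcyc ⟨σ, hσ⟩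
  simp only [hcard] at hScard
  have hfill : ∀ F ∈ S, F ⊆ simplices (rng n) d ∧ Collapsible F ∧ IsAcyclic F ∧ bd F = Z ∧
      ((n - 1).choose d : ℤ) - #F ≤ (if 2 ≤ d then ((n - 1).choose (d - 2) : ℤ) else 0) := by
    intro F hF
    obtain ⟨hsub, hcoll, hbd, hsize⟩ := hS F hF
    rw [hcard] at hsize
    rw [simplices_eq_powersetCard]
    exact ⟨hsub, hcoll, hcoll.isAcyclic, hbd, sub_le_comm.mp hsize⟩
  exact ⟨⟨F, hfill F hFS⟩, S, hScard, hfill⟩
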